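/- arXiv:2008.11101 — 2 statements merged into one kernel-verified Lean document; each statement's English description precedes it below -/
import Mathlib

section
/- For every biquadratic polynomial Q(x,y) over ℚ, the Eisenstein D-invariants of its two partial discriminants coincide: D(Δ₁) = D(Δ₂). -/
/-!
Let `G` be the Gram matrix of the discriminant `b² - 4ac`. Substituting the rows of the coefficient
matrix `q` into this quadratic form gives one partial discriminant as `vᵀ S v`, with `S = qᵀ G q`
and `v = (1, x, x²)`. The other one comes from `S' = q G qᵀ` in the same way, and the matrices
`G S = (G qᵀ)(G q)` and `G S' = (G q)(G qᵀ)` have the same characteristic polynomial. It remains to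
see that `12 D` of the quartic `vᵀ S v` depends only on the characteristic polynomial
`X³ + χ₂ X² + χ₁ X + χ₀` of `G S`. Since `vᵀ G⁻¹ v = 0`, the quartic does not change when `S` is
replaced by `S + t G⁻¹`, which shifts the eigenvalues of `G S` by `t`; accordingly
`12 D = χ₂² - 3 χ₁`, the shift-invariant symmetric function of degree two of the eigenvalues.
-/

open Polynomial

/-- The Eisenstein `D`-invariant of a quartic polynomial
`f = a x⁴ + 4b x³ + 6c x² + 4d x + e`, i.e. `D(f) = a e + 3 c² − 4 b d`,
expressed via the raw coefficients of `f`
(`a = f.coeff 4`, `b = f.coeff 3 / 4`, `c = f.coeff 2 / 6`, `d = f.coeff 1 / 4`,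
`e = f.coeff 0`). -/
noncomputable def eisensteinD (f : Polynomial ℚ) : ℚ :=
  f.coeff 4 * f.coeff 0 + 3 * (f.coeff 2 / 6) ^ 2 - 4 * (f.coeff 3 / 4) * (f.coeff 1 / 4)

section Matrix

open Matrix

theorem isSymm_transpose_mul_mul {R m n : Type*} [NonUnitalCommSemiring R] [Fintype m]
    {S : Matrix m m R} (hS : S.IsSymm) (A : Matrix m n R) : (Aᵀ * S * A).IsSymm := by
  rw [IsSymm, transpose_mul, transpose_mul, hS.eq, transpose_transpose, Matrix.mul_assoc]

variable {R : Type*} [CommRing R]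

theorem charpoly_mul_mul_mul_rotate {n : Type*} [Fintype n] [DecidableEq n]
    (G A H B : Matrix n n R) :
    (G * (A * H * B)).charpoly = (H * (B * G * A)).charpoly := by
  simpa only [Matrix.mul_assoc] using charpoly_mul_comm (G * A) (H * B)

theorem charpoly_fin_three (A : Matrix (Fin 3) (Fin 3) R) :
    A.charpoly = X ^ 3 - C A.trace * X ^ 2 +
      C (A 0 0 * A 1 1 - A 0 1 * A 1 0 + (A 0 0 * A 2 2 - A 0 2 * A 2 0) +
        (A 1 1 * A 2 2 - A 1 2 * A 2 1)) * X - C A.det := by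
  simp only [charpoly, det_fin_three, trace_fin_three, charmatrix_apply, diagonal_apply, map_add,
    map_sub, map_mul, Fin.isValue, Fin.reduceEq, if_true, if_false]
  ring

theorem charpoly_fin_three_coeff_two (A : Matrix (Fin 3) (Fin 3) R) :
    A.charpoly.coeff 2 = -A.trace := by
  simp [charpoly_fin_three, coeff_X_pow, -map_add, -map_sub]

theorem charpoly_fin_three_coeff_one (A : Matrix (Fin 3) (Fin 3) R) :
    A.charpoly.coeff 1 = A 0 0 * A 1 1 - A 0 1 * A 1 0 + (A 0 0 * A 2 2 - A 0 2 * A 2 0) +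
      (A 1 1 * A 2 2 - A 1 2 * A 2 1) := by
  simp [charpoly_fin_three, coeff_X_pow, coeff_C, -map_add, -map_sub]

end Matrix

section Discriminant

open Matrix

variable {R : Type*} [CommRing R]

/-- The Gram matrix of the discriminant `b² - 4ac`, as a quadratic form in `(c, b, a)`: the
coefficient vector of `a x² + b x + c` listed from the constant term upwards. -/
def discrimGram : Matrix (Fin 3) (Fin 3) R :=
  !![0, 0, -2; 0, 1, 0; -2, 0, 0]

theorem isSymm_discrimGram : (discrimGram : Matrix (Fin 3) (Fin 3) R).IsSymm := by
  ext i j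
  fin_cases i <;> fin_cases j <;> rfl

theorem discrimGram_mul (S : Matrix (Fin 3) (Fin 3) R) :
    discrimGram * S = of ![(-2 : R) • S 2, S 1, (-2 : R) • S 0] := by
  ext i j
  fin_cases i <;> simp [discrimGram, mul_apply, Fin.sum_univ_three]

theorem discrim_eq_sum_discrimGram {A : Type*} [CommRing A] [Algebra R A] (v : Fin 3 → A) :
    discrim (v 2) (v 1) (v 0) = ∑ k, ∑ l, (discrimGram k l : R) • (v k * v l) := by
  simp only [discrim, discrimGram, of_apply, cons_val, Fin.sum_univ_three, Algebra.smul_def,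
    map_zero, map_one, map_neg, map_ofNat]
  ring

/-- The quartic `vᵀ S v` with `v = (1, x, x²)`: the restriction of the ternary quadratic form with
Gram matrix `S` to the conic parametrized by `v`. -/
noncomputable def conicRestriction (S : Matrix (Fin 3) (Fin 3) R) : R[X] :=
  ∑ i : Fin 3, ∑ j : Fin 3, C (S i j) * X ^ (i + j : ℕ)

theorem coeff_conicRestriction (S : Matrix (Fin 3) (Fin 3) R) (k : ℕ) :
    (conicRestriction S).coeff k = ∑ i : Fin 3, ∑ j : Fin 3, if k = i + j then S i j else 0 := by
  simp only [conicRestriction, finsetSum_coeff, coeff_C_mul_X_pow]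

theorem conicRestriction_transpose_mul_mul (S A : Matrix (Fin 3) (Fin 3) R) :
    conicRestriction (Aᵀ * S * A) = ∑ k, ∑ l, S k l •
      ((∑ i : Fin 3, C (A k i) * X ^ (i : ℕ)) * ∑ j : Fin 3, C (A l j) * X ^ (j : ℕ)) := by
  simp only [conicRestriction, Matrix.mul_apply, transpose_apply, Fin.sum_univ_three, map_add,
    map_mul, smul_eq_C_mul, pow_add]
  ring

/-- The partial discriminant `Δ₁(y)`, with respect to `x`, of the biquadratic polynomial
`∑ q i j x^i y^j`. The other one, `Δ₂(x)`, is the partial discriminant of `qᵀ`. -/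
noncomputable def partialDiscriminant (q : Matrix (Fin 3) (Fin 3) R) : R[X] :=
  discrim (∑ j : Fin 3, C (q 2 j) * X ^ (j : ℕ)) (∑ j : Fin 3, C (q 1 j) * X ^ (j : ℕ))
    (∑ j : Fin 3, C (q 0 j) * X ^ (j : ℕ))

theorem partialDiscriminant_eq_conicRestriction (q : Matrix (Fin 3) (Fin 3) R) :
    partialDiscriminant q = conicRestriction (qᵀ * discrimGram * q) :=
  (discrim_eq_sum_discrimGram fun i ↦ ∑ j : Fin 3, C (q i j) * X ^ (j : ℕ)).trans
    (conicRestriction_transpose_mul_mul discrimGram q).symm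

/-- The classical invariant `I = 12ae - 3bd + c²` of a quartic `a x⁴ + b x³ + c x² + d x + e`. It is
`12` times the Eisenstein `D`-invariant; the coefficients carry no binomial factors, so that it is
defined over every commutative ring. -/
def quarticInvariantI (f : R[X]) : R :=
  12 * f.coeff 4 * f.coeff 0 - 3 * f.coeff 3 * f.coeff 1 + f.coeff 2 ^ 2

theorem eisensteinD_eq_quarticInvariantI_div (f : ℚ[X]) :
    eisensteinD f = quarticInvariantI f / 12 := by
  rw [eisensteinD, quarticInvariantI]
  ring

theorem quarticInvariantI_conicRestriction {S : Matrix (Fin 3) (Fin 3) R} (hS : S.IsSymm) :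
    quarticInvariantI (conicRestriction S) =
      12 * (S 0 0 * S 2 2 - S 0 1 * S 1 2) + (S 1 1 + 2 * S 0 2) ^ 2 := by
  have h₀ : (conicRestriction S).coeff 0 = S 0 0 := by
    simp [coeff_conicRestriction, Fin.sum_univ_three]
  have h₁ : (conicRestriction S).coeff 1 = 2 * S 0 1 := by
    simp [coeff_conicRestriction, Fin.sum_univ_three, hS.apply 0 1, two_mul]
  have h₂ : (conicRestriction S).coeff 2 = S 0 2 + S 1 1 + S 0 2 := by
    simp [coeff_conicRestriction, Fin.sum_univ_three, hS.apply 0 2]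
  have h₃ : (conicRestriction S).coeff 3 = 2 * S 1 2 := by
    simp [coeff_conicRestriction, Fin.sum_univ_three, hS.apply 1 2, two_mul]
  have h₄ : (conicRestriction S).coeff 4 = S 2 2 := by
    simp [coeff_conicRestriction, Fin.sum_univ_three]
  rw [quarticInvariantI, h₀, h₁, h₂, h₃, h₄]
  ring

theorem quarticInvariantI_conicRestriction_eq_charpoly {S : Matrix (Fin 3) (Fin 3) R}
    (hS : S.IsSymm) :
    quarticInvariantI (conicRestriction S) =
      (discrimGram * S).charpoly.coeff 2 ^ 2 - 3 * (discrimGram * S).charpoly.coeff 1 := by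
  have trace_eq : (discrimGram * S).trace = S 1 1 - 4 * S 0 2 := by
    simp only [discrimGram_mul, trace_fin_three, of_apply, cons_val, Pi.smul_apply, smul_eq_mul,
      hS.apply 0 2]
    ring
  have coeff_one_eq : (discrimGram * S).charpoly.coeff 1 =
      4 * (S 0 1 * S 1 2 - S 0 2 * S 1 1) + 4 * (S 0 2 ^ 2 - S 0 0 * S 2 2) := by
    simp only [charpoly_fin_three_coeff_one, discrimGram_mul, of_apply, cons_val, Pi.smul_apply,
      smul_eq_mul, hS.apply 0 1, hS.apply 0 2, hS.apply 1 2]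
    ring
  rw [quarticInvariantI_conicRestriction hS, charpoly_fin_three_coeff_two, trace_eq, coeff_one_eq]
  ring

theorem quarticInvariantI_partialDiscriminant (q : Matrix (Fin 3) (Fin 3) R) :
    quarticInvariantI (partialDiscriminant q) =
      (discrimGram * (qᵀ * discrimGram * q)).charpoly.coeff 2 ^ 2 -
        3 * (discrimGram * (qᵀ * discrimGram * q)).charpoly.coeff 1 := by
  rw [partialDiscriminant_eq_conicRestriction, quarticInvariantI_conicRestriction_eq_charpoly
    (isSymm_transpose_mul_mul isSymm_discrimGram q)]

theorem eisensteinD_partialDiscriminant_eq_general (q : Matrix (Fin 3) (Fin 3) R) :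
    quarticInvariantI (partialDiscriminant q) = quarticInvariantI (partialDiscriminant qᵀ) := by
  rw [quarticInvariantI_partialDiscriminant, quarticInvariantI_partialDiscriminant,
    transpose_transpose, charpoly_mul_mul_mul_rotate]

end Discriminant

/-- For a biquadratic polynomial `Q(x,y) = Σ_{0 ≤ i,j ≤ 2} q i j * x^i * y^j` over `ℚ`,
the Eisenstein `D`-invariants of its two partial discriminants
`Δ₁(y) = b̃(y)² − 4 ã(y) c̃(y)` and `Δ₂(x) = b(x)² − 4 a(x) c(x)` coincide. -/
theorem eisensteinD_partialDiscriminant_eq (q : Fin 3 → Fin 3 → ℚ) :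
    eisensteinD ((∑ j : Fin 3, C (q 1 j) * X ^ (j : ℕ)) ^ 2 -
        4 * (∑ j : Fin 3, C (q 2 j) * X ^ (j : ℕ)) * (∑ j : Fin 3, C (q 0 j) * X ^ (j : ℕ))) =
      eisensteinD ((∑ i : Fin 3, C (q i 1) * X ^ (i : ℕ)) ^ 2 -
        4 * (∑ i : Fin 3, C (q i 2) * X ^ (i : ℕ)) * (∑ i : Fin 3, C (q i 0) * X ^ (i : ℕ))) := by
  rw [eisensteinD_eq_quarticInvariantI_div, eisensteinD_eq_quarticInvariantI_div]
  exact congrArg (· / 12) (eisensteinD_partialDiscriminant_eq_general (Matrix.of q))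
end

section
/- For arbitrary rational numbers q_{ij} (0 ≤ i,j ≤ 2), the quantities X and Y constructed from them satisfy the polynomial identity Y² = 4X³ − D·X + E, where D = D(Δ₂) and E = E(Δ₂) are the Eisenstein invariants of the partial discriminant Δ₂ of the biquadratic polynomial Q(x,y) = Σ q_{ij}x^i y^j. Equivalently, the point Ω₃ = (X, Y) induced by the QRT map of the walk lies on the Weierstrass curve y² = 4x³ − g₂x − g₃ with g₂ = D(Δ₂) and g₃ = −E(Δ₂). -/
open Polynomial

/-- The Eisenstein `E`-invariant of a quartic `f = a x⁴ + 4b x³ + 6c x² + 4d x + e`: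
`E(f) = a d² + b² e − a c e − 2 b c d + c³`, via raw coefficients. -/
noncomputable def eisensteinE (f : Polynomial ℚ) : ℚ :=
  f.coeff 4 * (f.coeff 1 / 4) ^ 2 + (f.coeff 3 / 4) ^ 2 * f.coeff 0 -
    f.coeff 4 * (f.coeff 2 / 6) * f.coeff 0 -
    2 * (f.coeff 3 / 4) * (f.coeff 2 / 6) * (f.coeff 1 / 4) + (f.coeff 2 / 6) ^ 3

/-!
Write `v = (1, x, x²)` and `A` for the coefficient matrix, so that `Δ₂ = vᵀ (A J Aᵀ) v` with `J` the
Gram matrix of the discriminant `b² - 4ac`. A symmetric matrix `N` with `vᵀ N v = f` is determined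
by the quartic `f` up to multiples of the form `v₁² - v₀ v₂`, which vanishes on the conic traced by
`v`. Rescaled by `diag (1, 2, 1)`, it is therefore a member of the pencil spanned by the
catalecticant of `f` and that form, whose determinant is the resolvent cubic `-(4t³ - D t + E)`. For
`N = A J Aᵀ` the parameter `t` is the abscissa of `Ω₃`, and `det N = -4 (det A)²` is the square of
its ordinate up to the factor `-4`.
-/

open Matrix

theorem isSymm_mul_mul_transpose {ι κ S : Type*} [Fintype κ] [CommSemiring S]
    (A : Matrix ι κ S) {B : Matrix κ κ S} (hB : B.IsSymm) : (A * B * Aᵀ).IsSymm := by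
  rw [IsSymm, transpose_mul, transpose_mul, transpose_transpose, hB.eq, Matrix.mul_assoc]

section VeroneseForm

variable {R : Type*} [CommRing R] {m n : ℕ}

/-- The restriction of the quadratic form with matrix `N` to the rational normal curve
`x ↦ (1, x, …, x ^ (n - 1))`, as a polynomial in the parameter `x`. -/
noncomputable def veroneseForm (N : Matrix (Fin n) (Fin n) R) : R[X] :=
  (fun i : Fin n => (X : R[X]) ^ (i : ℕ)) ⬝ᵥ N.map C *ᵥ fun i => X ^ (i : ℕ)

theorem coeff_veroneseForm (N : Matrix (Fin n) (Fin n) R) (k : ℕ) :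
    (veroneseForm N).coeff k = ∑ i : Fin n, ∑ j : Fin n, if k = i + j then N i j else 0 := by
  have monomial_form (i j : Fin n) :
      (X : R[X]) ^ (i : ℕ) * (C (N i j) * X ^ (j : ℕ)) = C (N i j) * X ^ (i + j : ℕ) := by ring
  simp only [veroneseForm, dotProduct, mulVec, map_apply, Finset.mul_sum, monomial_form,
    finsetSum_coeff, coeff_C_mul_X_pow]

theorem veroneseForm_mul_mul_transpose (A : Matrix (Fin m) (Fin n) R)
    (B : Matrix (Fin n) (Fin n) R) :
    veroneseForm (A * B * Aᵀ) =
      (fun j => ∑ i, C (A i j) * X ^ (i : ℕ)) ⬝ᵥ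
        B.map C *ᵥ fun j => ∑ i, C (A i j) * X ^ (i : ℕ) := by
  have column_polynomials : (fun j => ∑ i, C (A i j) * (X : R[X]) ^ (i : ℕ)) =
      (A.map C)ᵀ *ᵥ fun i => X ^ (i : ℕ) := rfl
  rw [column_polynomials, veroneseForm, Matrix.map_mul, Matrix.map_mul, transpose_map,
    ← mulVec_mulVec, ← mulVec_mulVec, dotProduct_mulVec, ← mulVec_transpose]

variable (R) in
/-- The matrix of the discriminant `y₁² - 4 y₀ y₂` as a quadratic form in the coefficients of
`y₀ + y₁ y + y₂ y²`. -/
def discriminantMatrix : Matrix (Fin 3) (Fin 3) R :=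
  !![0, 0, -2; 0, 1, 0; -2, 0, 0]

theorem isSymm_discriminantMatrix : (discriminantMatrix R).IsSymm := by
  ext i j
  fin_cases i <;> fin_cases j <;> rfl

theorem det_discriminantMatrix : (discriminantMatrix R).det = -4 := by
  simp only [discriminantMatrix, det_fin_three, of_apply, cons_val]
  ring

theorem mul_discriminantMatrix_mul_transpose_apply (A : Matrix (Fin m) (Fin 3) R) (i k : Fin m) :
    (A * discriminantMatrix R * Aᵀ) i k =
      A i 1 * A k 1 - 2 * (A i 0 * A k 2 + A i 2 * A k 0) := by
  simp only [discriminantMatrix, mul_apply, transpose_apply, Fin.sum_univ_three, of_apply, cons_val]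
  ring

theorem veroneseForm_mul_discriminantMatrix_mul_transpose (A : Matrix (Fin m) (Fin 3) R) :
    veroneseForm (A * discriminantMatrix R * Aᵀ) =
      (∑ i, C (A i 1) * X ^ (i : ℕ)) ^ 2 -
        4 * (∑ i, C (A i 2) * X ^ (i : ℕ)) * (∑ i, C (A i 0) * X ^ (i : ℕ)) := by
  rw [veroneseForm_mul_mul_transpose]
  simp only [dotProduct, mulVec, Fin.sum_univ_three, discriminantMatrix, map_apply, of_apply,
    cons_val, map_zero, map_one, map_neg, map_ofNat]
  ring

end VeroneseForm

section ResolventCubic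

/-- The catalecticant (Hankel) matrix of a binary quartic, whose entries are its coefficients
divided by the binomial coefficients. The quartic is passed as a polynomial, of which the
coefficients of degree above four are ignored. -/
noncomputable def catalecticant (f : ℚ[X]) : Matrix (Fin 3) (Fin 3) ℚ :=
  !![f.coeff 0, f.coeff 1 / 4, f.coeff 2 / 6;
     f.coeff 1 / 4, f.coeff 2 / 6, f.coeff 3 / 4;
     f.coeff 2 / 6, f.coeff 3 / 4, f.coeff 4]

/-- The matrix of the quadratic form `4 z₀ z₂ - z₁²`, which vanishes on the conic
`x ↦ (1, 2x, x²)`. The factor two in the middle coordinate is the one for which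
the catalecticant of a quartic restricts to that quartic on the conic. -/
def conicMatrix : Matrix (Fin 3) (Fin 3) ℚ :=
  !![0, 0, 2; 0, -1, 0; 2, 0, 0]

theorem det_catalecticant_sub_smul_conicMatrix (f : ℚ[X]) (t : ℚ) :
    (catalecticant f - t • conicMatrix).det =
      -(4 * t ^ 3 - eisensteinD f * t + eisensteinE f) := by
  simp only [catalecticant, conicMatrix, eisensteinD, eisensteinE, det_fin_three,
    Matrix.sub_apply, Matrix.smul_apply, smul_eq_mul, of_apply, cons_val]
  ring

theorem catalecticant_veroneseForm {N : Matrix (Fin 3) (Fin 3) ℚ} (hN : N.IsSymm) :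
    catalecticant (veroneseForm N) =
      !![N 0 0, N 0 1 / 2, (N 1 1 + 2 * N 0 2) / 6;
         N 0 1 / 2, (N 1 1 + 2 * N 0 2) / 6, N 1 2 / 2;
         (N 1 1 + 2 * N 0 2) / 6, N 1 2 / 2, N 2 2] := by
  have coeff_zero : (veroneseForm N).coeff 0 = N 0 0 := by
    simp [coeff_veroneseForm, Fin.sum_univ_three]
  have scaled_coeff_one : (veroneseForm N).coeff 1 / 4 = N 0 1 / 2 := by
    simp only [coeff_veroneseForm, Fin.sum_univ_three, hN.apply 0 1]
    norm_num
    ring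
  have scaled_coeff_two : (veroneseForm N).coeff 2 / 6 = (N 1 1 + 2 * N 0 2) / 6 := by
    simp only [coeff_veroneseForm, Fin.sum_univ_three, hN.apply 0 2]
    norm_num
    ring
  have scaled_coeff_three : (veroneseForm N).coeff 3 / 4 = N 1 2 / 2 := by
    simp only [coeff_veroneseForm, Fin.sum_univ_three, hN.apply 1 2]
    norm_num
    ring
  have coeff_four : (veroneseForm N).coeff 4 = N 2 2 := by
    simp [coeff_veroneseForm, Fin.sum_univ_three]
  rw [catalecticant, coeff_zero, scaled_coeff_one, scaled_coeff_two, scaled_coeff_three,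
    coeff_four]

theorem eq_diagonal_mul_catalecticant_sub_smul_conicMatrix_mul_diagonal
    {N : Matrix (Fin 3) (Fin 3) ℚ} (hN : N.IsSymm) :
    N = diagonal ![1, 2, 1] *
      (catalecticant (veroneseForm N) - ((N 1 1 - 4 * N 0 2) / 12) • conicMatrix) *
        diagonal ![1, 2, 1] := by
  have N_eq : N = !![N 0 0, N 0 1, N 0 2; N 0 1, N 1 1, N 1 2; N 0 2, N 1 2, N 2 2] := by
    conv_lhs => rw [eta_fin_three N, hN.apply 0 1, hN.apply 0 2, hN.apply 1 2]
  conv_lhs => rw [N_eq]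
  rw [catalecticant_veroneseForm hN]
  ext i j
  fin_cases i <;> fin_cases j <;>
    simp only [conicMatrix, mul_diagonal, diagonal_mul, Matrix.sub_apply, Matrix.smul_apply,
      smul_eq_mul, of_apply, cons_val, Fin.zero_eta, Fin.mk_one, Fin.reduceFinMk] <;>
    ring

theorem det_eq_resolvent_veroneseForm {N : Matrix (Fin 3) (Fin 3) ℚ} (hN : N.IsSymm)
    {t : ℚ} (ht : t = (N 1 1 - 4 * N 0 2) / 12) :
    N.det =
      -4 * (4 * t ^ 3 - eisensteinD (veroneseForm N) * t + eisensteinE (veroneseForm N)) := by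
  have det_scaling : (diagonal ![(1 : ℚ), 2, 1]).det = 2 := by
    simp [det_diagonal, Fin.prod_univ_three]
  conv_lhs => rw [eq_diagonal_mul_catalecticant_sub_smul_conicMatrix_mul_diagonal hN]
  rw [← ht, det_mul, det_mul, det_scaling, det_catalecticant_sub_smul_conicMatrix]
  ring

end ResolventCubic

/-- For arbitrary rationals `q i j` (the coefficient matrix of the kernel
`Q(x,y) = Σ q i j * x^i * y^j` of a weighted walk), the point `Ω₃ = (X, Y)` with
`X = (q₁₁² − 4 q₁₀ q₁₂ − 4 q₀₁ q₂₁ + 8 q₀₂ q₂₀ + 8 q₀₀ q₂₂)/12` and `Y = − det M`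
lies on the Weierstrass curve `y² = 4x³ − g₂ x − g₃` with `g₂ = D(Δ₂)`, `g₃ = −E(Δ₂)`:
that is, `Y² = 4X³ − D·X + E`. -/
theorem omega_three_on_weierstrass_normal_form (q : Fin 3 → Fin 3 → ℚ)
    (X : ℚ) (hX : X = (q 1 1 ^ 2 - 4 * q 1 0 * q 1 2 - 4 * q 0 1 * q 2 1
      + 8 * q 0 2 * q 2 0 + 8 * q 0 0 * q 2 2) / 12)
    (Y : ℚ) (hY : Y = - Matrix.det
      !![q 2 2, q 2 1, q 2 0; q 1 2, q 1 1, q 1 0; q 0 2, q 0 1, q 0 0])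
    (D E : ℚ)
    (hD : D = eisensteinD ((∑ i : Fin 3, Polynomial.C (q i 1) * Polynomial.X ^ (i : ℕ)) ^ 2 -
      4 * (∑ i : Fin 3, Polynomial.C (q i 2) * Polynomial.X ^ (i : ℕ)) *
        (∑ i : Fin 3, Polynomial.C (q i 0) * Polynomial.X ^ (i : ℕ))))
    (hE : E = eisensteinE ((∑ i : Fin 3, Polynomial.C (q i 1) * Polynomial.X ^ (i : ℕ)) ^ 2 -
      4 * (∑ i : Fin 3, Polynomial.C (q i 2) * Polynomial.X ^ (i : ℕ)) *
        (∑ i : Fin 3, Polynomial.C (q i 0) * Polynomial.X ^ (i : ℕ)))) :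
    Y ^ 2 = 4 * X ^ 3 - D * X + E := by
  set A : Matrix (Fin 3) (Fin 3) ℚ := of q
  set N := A * discriminantMatrix ℚ * Aᵀ with hN
  have hN_symm : N.IsSymm := isSymm_mul_mul_transpose A isSymm_discriminantMatrix
  have hX_N : X = (N 1 1 - 4 * N 0 2) / 12 := by
    rw [hX, hN, mul_discriminantMatrix_mul_transpose_apply,
      mul_discriminantMatrix_mul_transpose_apply]
    simp only [A, of_apply]
    ring
  have hY_A : Y = -A.det := by
    simp only [hY, A, det_fin_three, of_apply, cons_val]
    ring
  have hdet : N.det = -4 * Y ^ 2 := by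
    rw [hN, det_mul, det_mul, det_transpose, det_discriminantMatrix, hY_A]
    ring
  have hΔ := veroneseForm_mul_discriminantMatrix_mul_transpose A
  have hresolvent := det_eq_resolvent_veroneseForm hN_symm hX_N
  rw [hdet, hΔ] at hresolvent
  rw [hD, hE]
  exact mul_left_cancel₀ (by norm_num) hresolvent
end
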